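/- Let X, Y, K, G, F*, Q, P*, L_Q, L_P be as in the primal–dual setting, and assume a saddle point exists. Suppose τ, σ > 0 satisfy τL_Q < 2, σL_P < 2 and ‖K‖² < (1/τ − L_Q/2)(1/σ − L_P/2), and let α ∈ [0,1) and α_k ∈ [0, α] for all k. Let (x^k, y^k) be inertial primal–dual forward–backward iterates. If ∑_{k≥1} α_k‖(x^k, y^k) − (x^{k−1}, y^{k−1})‖²_M < ∞, then (x^k, y^k) converges weakly in X × Y to a saddle point (x*, y*). -/

import Mathlib

/-!
On `X × Y` the algorithm is an inertial forward–backward step in the metric `M`, for the monotone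
operator `(x, y) ↦ (∂G x + K* y, ∂F* y - K x)` and the forward map `(∇Q, ∇P*)`.

Write `z = (x, y)`, `w = (ξ, ζ)`.  Monotonicity and the three-point cocoercivity inequality
(`three_point`) give for every saddle point `s` the estimate
`‖z⁺ - s‖²_M ≤ ‖w - s‖²_M - N(w - z⁺)` (`fejer_step`), where `N` is the form obtained from `M` by
lowering `1/τ`, `1/σ` to `1/τ - L_Q/2`, `1/σ - L_P/2`.  The bound on `‖K‖²` says that `N` is
coercive (`blockForm_coercive`).  Expanding `‖w - s‖²_M` by `blockForm_inertial` leads to an inertial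
Fejér recursion whose error is summable by hypothesis, so `‖z k - s‖²_M` converges and
`∑ N(w k - z (k + 1)) < ∞` (`alvarez_attouch`).  Hence `z` is bounded and both `w k - z (k + 1)` and
`w k - z k` tend to zero strongly.

Along every ultrafilter finer than `atTop` the bounded sequence `z` has a weak limit
(`exists_weak_limit`), which is a saddle point by weak lower semicontinuity of `G + Q` and
`F* + P*` (`saddle_of_weak_limit`).  Opial's argument in the metric `M` shows that all these weak
limits coincide, and a sequence converging to one limit along all ultrafilters finer than `atTop`
converges along `atTop`.
-/


open scoped RealInnerProductSpace
open Filter Topology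

/-- The subdifferential of a convex function. -/
def subdiff {E : Type*} [NormedAddCommGroup E] [InnerProductSpace ℝ E]
    (f : E → ℝ) (x : E) : Set E :=
  {u | ∀ z, f x + ⟪u, z - x⟫ ≤ f z}

/-! ### Smooth convex functions and subgradients -/

lemma hasDerivAt_along {X : Type*} [NormedAddCommGroup X] [InnerProductSpace ℝ X] [CompleteSpace X]
    {Q : X → ℝ} {g p d : X} {t : ℝ} (hg : HasGradientAt Q g (p + t • d)) :
    HasDerivAt (fun s : ℝ => Q (p + s • d)) ⟪g, d⟫ t := by
  have h1 : HasDerivAt (fun s : ℝ => p + s • d) d t := by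
    simpa using ((hasDerivAt_id t).smul_const d).const_add p
  have h2 := hg.hasFDerivAt.comp_hasDerivAt t h1
  simpa [Function.comp_def] using h2

/-- The sum rule `∂(G + Q) ⊆ ∂G + ∇Q`: if `g` is a subgradient of `G + Q` at `p`, then `g - ∇Q p`
is a subgradient of `G` at `p`. -/
lemma sub_gradient_mem_subdiff {X : Type*} [NormedAddCommGroup X] [InnerProductSpace ℝ X]
    [CompleteSpace X] {G Q : X → ℝ} {p g gq : X} (hG : ConvexOn ℝ Set.univ G)
    (hQ : HasGradientAt Q gq p) (h : g ∈ subdiff (fun z => G z + Q z) p) :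
    g - gq ∈ subdiff G p := by
  intro u
  have hd : HasDerivAt (fun s : ℝ => Q (p + s • (u - p))) ⟪gq, u - p⟫ 0 :=
    hasDerivAt_along (by simpa using hQ)
  have hlim := hd.tendsto_slope_zero_right
  have key : ⟪g, u - p⟫ - (G u - G p) ≤ ⟪gq, u - p⟫ := by
    refine ge_of_tendsto hlim ?_
    filter_upwards [Ioo_mem_nhdsGT (zero_lt_one' ℝ)] with t ht
    have h1 := h (p + t • (u - p))
    have h2 := hG.2 (Set.mem_univ p) (Set.mem_univ u) (sub_nonneg.2 ht.2.le) ht.1.le (by ring)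
    have h3 : (1 - t) • p + t • u = p + t • (u - p) := by module
    rw [h3] at h2
    simp only [add_sub_cancel_left, inner_smul_right, smul_eq_mul] at h1 h2 ⊢
    simp only [zero_add, zero_smul, add_zero]
    rw [inv_mul_eq_div, le_div_iff₀ ht.1]
    linarith
  rw [inner_sub_left]
  linarith

/-- A gradient of a convex function is a subgradient. -/
lemma gradient_mem_subdiff {X : Type*} [NormedAddCommGroup X] [InnerProductSpace ℝ X]
    [CompleteSpace X] {Q : X → ℝ} {p gq : X} (hQc : ConvexOn ℝ Set.univ Q)
    (hQ : HasGradientAt Q gq p) : gq ∈ subdiff Q p := by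
  have hneg : HasGradientAt (fun z => -Q z) (-gq) p := by
    rw [hasGradientAt_iff_hasFDerivAt, map_neg]
    exact hQ.hasFDerivAt.neg
  have h := sub_gradient_mem_subdiff (g := 0) hQc hneg (fun z => by simp)
  simpa using h

/-- The descent lemma: an `L`-Lipschitz gradient gives a quadratic upper bound. -/
lemma descent {X : Type*} [NormedAddCommGroup X] [InnerProductSpace ℝ X] [CompleteSpace X]
    {Q : X → ℝ} {gQ : X → X} {L : ℝ} (hL : 0 ≤ L) (hgQ : ∀ x, HasGradientAt Q (gQ x) x)
    (hlip : LipschitzWith (Real.toNNReal L) gQ) (x d : X) :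
    Q (x + d) ≤ Q x + ⟪gQ x, d⟫ + L / 2 * ‖d‖ ^ 2 := by
  have hder (t : ℝ) : HasDerivAt
      (fun s : ℝ => Q (x + s • d) - s * ⟪gQ x, d⟫ - s ^ 2 * (L / 2 * ‖d‖ ^ 2))
      (⟪gQ (x + t • d), d⟫ - ⟪gQ x, d⟫ - 2 * t * (L / 2 * ‖d‖ ^ 2)) t := by
    have h2 : HasDerivAt (fun s : ℝ => s * ⟪gQ x, d⟫) ⟪gQ x, d⟫ t := by
      simpa using (hasDerivAt_id t).mul_const ⟪gQ x, d⟫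
    have h3 : HasDerivAt (fun s : ℝ => s ^ 2 * (L / 2 * ‖d‖ ^ 2))
        (2 * t * (L / 2 * ‖d‖ ^ 2)) t := by
      simpa using (hasDerivAt_pow 2 t).mul_const (L / 2 * ‖d‖ ^ 2)
    exact ((hasDerivAt_along (hgQ _)).sub h2).sub h3
  have hanti := antitoneOn_of_deriv_nonpos (convex_Icc (0 : ℝ) 1)
    (fun t _ => (hder t).continuousAt.continuousWithinAt)
    (fun t _ => (hder t).differentiableAt.differentiableWithinAt) (fun t ht => by
      rw [interior_Icc] at ht
      rw [(hder t).deriv, ← inner_sub_left]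
      have h1 := real_inner_le_norm (gQ (x + t • d) - gQ x) d
      have h2 := hlip.norm_sub_le (x + t • d) x
      rw [Real.coe_toNNReal _ hL, add_sub_cancel_left, norm_smul, Real.norm_eq_abs,
        abs_of_pos ht.1] at h2
      nlinarith [norm_nonneg d, mul_le_mul_of_nonneg_right h2 (norm_nonneg d)])
  have h := hanti (Set.left_mem_Icc.2 zero_le_one) (Set.right_mem_Icc.2 zero_le_one) zero_le_one
  simp at h
  linarith

/-- The three-point form of the Baillon–Haddad cocoercivity inequality.  It needs no case
distinction at `L = 0`: it comes from adding the descent inequalities at the points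
`x - d` and `x' + d` with `d = (x - z) / 2`. -/
lemma three_point {X : Type*} [NormedAddCommGroup X] [InnerProductSpace ℝ X] [CompleteSpace X]
    {Q : X → ℝ} {gQ : X → X} {L : ℝ} (hL : 0 ≤ L) (hQ : ConvexOn ℝ Set.univ Q)
    (hgQ : ∀ x, HasGradientAt Q (gQ x) x)
    (hlip : LipschitzWith (Real.toNNReal L) gQ) (x x' z : X) :
    -(L / 4 * ‖x - z‖ ^ 2) ≤ ⟪gQ x - gQ x', z - x'⟫ := by
  set d : X := (1 / 2 : ℝ) • (x - z) with hd
  have h1 := descent hL hgQ hlip x (-d)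
  have h2 := descent hL hgQ hlip x' d
  have h3 := gradient_mem_subdiff hQ (hgQ x') (x + -d)
  have h4 := gradient_mem_subdiff hQ (hgQ x) (x' + d)
  have hn : ‖d‖ ^ 2 = ‖x - z‖ ^ 2 / 4 := by
    rw [hd, norm_smul, mul_pow]; norm_num; ring
  have hx : z - x' = (x - x') - (2 : ℝ) • d := by rw [hd]; module
  rw [norm_neg] at h1
  rw [hx]
  have e3 : x + -d - x' = (x - x') - d := by abel
  have e4 : x' + d - x = d - (x - x') := by abel
  rw [e3] at h3
  rw [e4] at h4
  simp only [inner_sub_left, inner_sub_right, inner_neg_right, inner_smul_right, hn]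
    at h1 h2 h3 h4 ⊢
  linarith

/-! ### Weak limits along ultrafilters -/

/-- Weak lower semicontinuity along an ultrafilter: a sublevel set of a convex lower
semicontinuous function is weakly closed. -/
lemma le_of_weak_limit {X : Type*} [NormedAddCommGroup X] [InnerProductSpace ℝ X] [CompleteSpace X]
    {f : X → ℝ} (hf : ConvexOn ℝ Set.univ f) (hlsc : LowerSemicontinuous f)
    {x : ℕ → X} {p : X} {U : Ultrafilter ℕ} (hx : ∀ u, Tendsto (fun k => ⟪x k, u⟫) U (𝓝 ⟪p, u⟫))
    {c : ℝ} (hc : ∀ᶠ k in (U : Filter ℕ), f (x k) ≤ c) : f p ≤ c := by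
  have hconv : Convex ℝ {z | f z ≤ c} := by simpa using hf.convex_le c
  have hclosed : IsClosed {z | f z ≤ c} := hlsc.isClosed_preimage c
  obtain ⟨k, hk⟩ := hc.exists
  obtain ⟨v, hv, hmin⟩ := exists_norm_eq_iInf_of_complete_convex ⟨x k, hk⟩
    hclosed.isComplete hconv p
  rw [norm_eq_iInf_iff_real_inner_le_zero hconv hv] at hmin
  -- The projection `v` of `p` onto the sublevel set separates `p` from all `x k` in the set.
  have hle : ⟪p, p - v⟫ ≤ ⟪v, p - v⟫ := by
    refine le_of_tendsto (hx (p - v)) ?_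
    filter_upwards [hc] with k hk
    have := hmin _ hk
    rw [real_inner_comm, inner_sub_left] at this
    linarith
  have h0 : ⟪p - v, p - v⟫ ≤ 0 := by rw [inner_sub_left]; linarith
  have hpv : p = v := sub_eq_zero.1 (real_inner_self_nonpos.1 h0)
  rw [hpv]; exact hv

/-- Banach–Alaoglu through the Riesz isomorphism.  Stated for ultrafilters, it needs no
separability of `X`, unlike the extraction of a weakly convergent subsequence through
metrizability. -/
lemma exists_weak_limit {X : Type*} [NormedAddCommGroup X] [InnerProductSpace ℝ X]
    [CompleteSpace X] {x : ℕ → X} {R : ℝ} (hR : ∀ k, ‖x k‖ ≤ R) (U : Ultrafilter ℕ) :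
    ∃ p, ∀ u, Tendsto (fun k => ⟪x k, u⟫) U (𝓝 ⟪p, u⟫) := by
  let w : ℕ → WeakDual ℝ X := fun k =>
    StrongDual.toWeakDual (InnerProductSpace.toDual ℝ X (x k))
  have hcomp := WeakDual.isCompact_closedBall (𝕜 := ℝ) (E := X) 0 R
  obtain ⟨φ, -, hφ⟩ := hcomp.ultrafilter_le_nhds (U.map w) (by
    rw [le_principal_iff]
    refine Filter.mem_map.2 (Filter.univ_mem' fun (k : ℕ) => ?_)
    simpa [w] using hR k)
  refine ⟨(InnerProductSpace.toDual ℝ X).symm (WeakDual.toStrongDual φ), fun u => ?_⟩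
  have h1 : Tendsto w U (𝓝 φ) := hφ
  have h2 := ((WeakDual.eval_continuous u).tendsto φ).comp h1
  rw [InnerProductSpace.toDual_symm_apply]
  exact h2

/-! ### Inertial Fejér sequences -/

/-- The Alvarez–Attouch lemma on inertial Fejér sequences: the positive parts of the increments
satisfy `θ (k + 1) ≤ α θ k + δ k`, so they are summable, and `φ` minus their partial sums is
decreasing. -/
lemma alvarez_attouch {φ δ ν a : ℕ → ℝ} {α : ℝ} (hα0 : 0 ≤ α) (hα1 : α < 1)
    (ha : ∀ k, a k ∈ Set.Icc 0 α) (hφ : ∀ k, 0 ≤ φ k) (hδ : ∀ k, 0 ≤ δ k) (hν : ∀ k, 0 ≤ ν k)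
    (hδs : Summable δ)
    (h : ∀ k, φ (k + 1) ≤ φ k + a k * (φ k - φ (k - 1)) + δ k - ν k) :
    (∃ l, Tendsto φ atTop (𝓝 l)) ∧ Summable ν := by
  let θ : ℕ → ℝ := fun k => max (φ k - φ (k - 1)) 0
  have hθ0 : ∀ k, 0 ≤ θ k := fun k => le_max_right _ _
  have haθ : ∀ k, a k * (φ k - φ (k - 1)) ≤ α * θ k := fun k =>
    (mul_le_mul_of_nonneg_left (le_max_left _ _) (ha k).1).trans
      (mul_le_mul_of_nonneg_right (ha k).2 (hθ0 k))
  have hstep : ∀ k, θ (k + 1) ≤ α * θ k + δ k := fun k => by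
    refine max_le ?_ (add_nonneg (mul_nonneg hα0 (hθ0 k)) (hδ k))
    have := h k; have := haθ k; have := hν k
    simp only [Nat.add_sub_cancel]
    linarith
  have hδle : ∀ n, ∑ i ∈ Finset.range n, δ i ≤ ∑' i, δ i := fun n =>
    hδs.sum_le_tsum _ (fun i _ => hδ i)
  have hθs : Summable θ := by
    refine summable_of_sum_range_le (c := (∑' i, δ i) / (1 - α)) hθ0 fun n => ?_
    have h0 : θ 0 = 0 := by simp [θ]
    have h1 : ∑ i ∈ Finset.range (n + 1), θ i ≤ α * ∑ i ∈ Finset.range n, θ i +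
        ∑ i ∈ Finset.range n, δ i := by
      rw [Finset.sum_range_succ', h0, add_zero, Finset.mul_sum, ← Finset.sum_add_distrib]
      exact Finset.sum_le_sum fun i _ => hstep i
    rw [Finset.sum_range_succ] at h1
    rw [le_div_iff₀ (sub_pos.2 hα1)]
    nlinarith [hθ0 n, hδle n]
  have hθle : ∀ n, ∑ i ∈ Finset.range n, θ i ≤ ∑' i, θ i := fun n =>
    hθs.sum_le_tsum _ (fun i _ => hθ0 i)
  constructor
  · let w : ℕ → ℝ := fun k => φ k - ∑ i ∈ Finset.range (k + 1), θ i
    have hanti : Antitone w := antitone_nat_of_succ_le fun k => by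
      simp only [w]
      rw [Finset.sum_range_succ _ (k + 1)]
      have : φ (k + 1) - φ k ≤ θ (k + 1) := le_max_left _ _
      linarith
    have hbdd : BddBelow (Set.range w) := ⟨-∑' i, θ i, by
      rintro _ ⟨k, rfl⟩
      have := hφ k; have := hθle (k + 1)
      simp only [w]; linarith⟩
    have h1 := tendsto_atTop_ciInf hanti hbdd
    have h2 := hθs.hasSum.tendsto_sum_nat.comp (tendsto_add_atTop_nat 1)
    refine ⟨_, (h1.add h2).congr fun k => ?_⟩
    simp [w]
  · refine summable_of_sum_range_le (c := φ 0 + α * ∑' i, θ i + ∑' i, δ i) hν fun n => ?_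
    have h1 : ∑ i ∈ Finset.range n, ν i ≤
        ∑ i ∈ Finset.range n, ((φ i - φ (i + 1)) + α * θ i + δ i) :=
      Finset.sum_le_sum fun i _ => by
        have := h i; have := haθ i
        linarith
    rw [Finset.sum_add_distrib, Finset.sum_add_distrib, Finset.sum_range_sub', ← Finset.mul_sum]
      at h1
    have := hφ n; have := hδle n; have := mul_le_mul_of_nonneg_left (hθle n) hα0
    linarith

/-! ### The metric on the product space -/

/-- The quadratic form `A‖a‖² - 2⟪K a, b⟫ + B‖b‖²` on `X × Y`.  For `A = 1/τ`, `B = 1/σ` it is the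
squared `M`-norm of `(a, b)`. -/
def blockForm {X Y : Type*} [NormedAddCommGroup X] [InnerProductSpace ℝ X]
    [NormedAddCommGroup Y] [InnerProductSpace ℝ Y] (K : X →L[ℝ] Y) (A B : ℝ) (a : X) (b : Y) : ℝ :=
  A * ‖a‖ ^ 2 - 2 * ⟪K a, b⟫ + B * ‖b‖ ^ 2

section BlockForm

variable {X Y : Type*} [NormedAddCommGroup X] [InnerProductSpace ℝ X]
    [NormedAddCommGroup Y] [InnerProductSpace ℝ Y]

lemma blockForm_coercive (K : X →L[ℝ] Y) {A B : ℝ} (hA : 0 < A) (hB : 0 < B)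
    (hK : ‖K‖ ^ 2 < A * B) :
    ∃ c > 0, ∀ a b, c * (‖a‖ ^ 2 + ‖b‖ ^ 2) ≤ blockForm K A B a b := by
  -- This `c` gives `(A - c) * (B - c) = ‖K‖² + c²`.
  set c := (A * B - ‖K‖ ^ 2) / (A + B) with hc
  have hAB : 0 < A + B := by positivity
  have hcpos : 0 < c := div_pos (sub_pos.2 hK) hAB
  have hcm : c * (A + B) = A * B - ‖K‖ ^ 2 := by rw [hc]; field_simp
  have hcA : c < A := by
    rw [hc, div_lt_iff₀ hAB]; nlinarith [sq_nonneg ‖K‖]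
  refine ⟨c, hcpos, fun a b => ?_⟩
  have h1 : ⟪K a, b⟫ ≤ ‖K‖ * ‖a‖ * ‖b‖ := (real_inner_le_norm _ _).trans
    (mul_le_mul_of_nonneg_right (K.le_opNorm a) (norm_nonneg b))
  have h2 : 0 ≤ (A - c) * ((A - c) * ‖a‖ ^ 2 - 2 * (‖K‖ * ‖a‖ * ‖b‖) + (B - c) * ‖b‖ ^ 2) := by
    have : (A - c) * ((A - c) * ‖a‖ ^ 2 - 2 * (‖K‖ * ‖a‖ * ‖b‖) + (B - c) * ‖b‖ ^ 2)
        = ((A - c) * ‖a‖ - ‖K‖ * ‖b‖) ^ 2 + c ^ 2 * ‖b‖ ^ 2 := by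
      linear_combination (-‖b‖ ^ 2) * hcm
    rw [this]; positivity
  have h3 := nonneg_of_mul_nonneg_right h2 (sub_pos.2 hcA)
  unfold blockForm
  linarith

/-- The identity `‖w + t(w - w')‖² = (1+t)‖w‖² - t‖w'‖² + t(1+t)‖w - w'‖²` for the form. -/
lemma blockForm_inertial (K : X →L[ℝ] Y) (A B t : ℝ) (u u' : X) (v v' : Y) :
    blockForm K A B (u + t • (u - u')) (v + t • (v - v')) =
      (1 + t) * blockForm K A B u v - t * blockForm K A B u' v'
        + t * (1 + t) * blockForm K A B (u - u') (v - v') := by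
  unfold blockForm
  simp only [← real_inner_self_eq_norm_sq, map_add, map_sub, map_smul, inner_add_left,
    inner_add_right, inner_sub_left, inner_sub_right, inner_smul_left, inner_smul_right,
    real_inner_comm u u', real_inner_comm v v', RCLike.conj_to_real]
  ring

/-- The quadratic terms in `(x k, y k)` cancel in a difference of two squared distances, so the
difference is weakly continuous. -/
lemma tendsto_blockForm_sub [CompleteSpace X] [CompleteSpace Y]
    (K : X →L[ℝ] Y) (A B : ℝ) {l : Filter ℕ} {x : ℕ → X} {y : ℕ → Y} {p₀ : X} {q₀ : Y}
    (hx : ∀ u, Tendsto (fun k => ⟪x k, u⟫) l (𝓝 ⟪p₀, u⟫))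
    (hy : ∀ v, Tendsto (fun k => ⟪y k, v⟫) l (𝓝 ⟪q₀, v⟫)) (p p' : X) (q q' : Y) :
    Tendsto (fun k => blockForm K A B (x k - p) (y k - q) - blockForm K A B (x k - p') (y k - q'))
      l (𝓝 (blockForm K A B (p₀ - p) (q₀ - q) - blockForm K A B (p₀ - p') (q₀ - q'))) := by
  have key (a : X) (b : Y) :
      blockForm K A B (a - p) (b - q) - blockForm K A B (a - p') (b - q') =
        2 * A * ⟪a, p' - p⟫ - 2 * ⟪a, ContinuousLinearMap.adjoint K (q' - q)⟫
          - 2 * ⟪b, K (p' - p)⟫ + 2 * B * ⟪b, q' - q⟫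
          + (blockForm K A B p q - blockForm K A B p' q') := by
    unfold blockForm
    rw [ContinuousLinearMap.adjoint_inner_right]
    simp only [← real_inner_self_eq_norm_sq, map_sub, inner_sub_left, inner_sub_right]
    rw [real_inner_comm p a, real_inner_comm p' a, real_inner_comm q b, real_inner_comm q' b,
      real_inner_comm b (K p), real_inner_comm b (K p')]
    ring
  simp only [key]
  exact (((((hx _).const_mul _).sub ((hx _).const_mul _)).sub ((hy _).const_mul _)).add
    ((hy _).const_mul _)).add_const _

end BlockForm

/-! ### One step of the algorithm and closedness of the saddle-point operator -/

lemma subdiff_monotone {E : Type*} [NormedAddCommGroup E] [InnerProductSpace ℝ E] {f : E → ℝ}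
    {x x' g g' : E} (h : g ∈ subdiff f x) (h' : g' ∈ subdiff f x') : 0 ≤ ⟪g - g', x - x'⟫ := by
  have h1 := h x'
  have h2 := h' x
  have h3 : x' - x = -(x - x') := by abel
  rw [h3, inner_neg_right] at h1
  rw [inner_sub_left]
  linarith

lemma tendsto_lipschitz_sub {E : Type*} [NormedAddCommGroup E] {g : E → E} {C : NNReal}
    (hg : LipschitzWith C g) {l : Filter ℕ} {s t : ℕ → E}
    (hst : Tendsto (fun k => s k - t k) l (𝓝 0)) :
    Tendsto (fun k => g (t k) - g (s k)) l (𝓝 0) := by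
  refine squeeze_zero_norm (a := fun k => C * ‖s k - t k‖) (fun k => ?_) (by
    simpa using hst.norm.const_mul (C : ℝ))
  rw [norm_sub_rev]
  exact hg.norm_sub_le _ _

lemma tendsto_inner_bounded {E : Type*} [NormedAddCommGroup E] [InnerProductSpace ℝ E]
    {l : Filter ℕ} {e s : ℕ → E} {R : ℝ} (u : E)
    (he : Tendsto e l (𝓝 0)) (hs : ∀ k, ‖s k‖ ≤ R) :
    Tendsto (fun k => ⟪e k, u - s k⟫) l (𝓝 0) := by
  refine squeeze_zero_norm (a := fun k => ‖e k‖ * (‖u‖ + R)) (fun k => ?_) (by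
    simpa using he.norm.mul_const (‖u‖ + R))
  refine (norm_inner_le_norm _ _).trans (mul_le_mul_of_nonneg_left ?_ (norm_nonneg _))
  exact (norm_sub_le _ _).trans (by linarith [hs k])

section PrimalDual

variable {X Y : Type*} [NormedAddCommGroup X] [InnerProductSpace ℝ X] [CompleteSpace X]
    [NormedAddCommGroup Y] [InnerProductSpace ℝ Y] [CompleteSpace Y]

/-- One forward–backward step from `(ξ, ζ)` to `(x', y')` decreases the squared `M`-distance to a
saddle point, up to the form in which `1/τ`, `1/σ` are lowered by `LQ/2`, `LP/2`. -/
lemma fejer_step {K : X →L[ℝ] Y} {G Q : X → ℝ} {Fs Ps : Y → ℝ} {gQ : X → X} {gP : Y → Y}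
    {LQ LP : ℝ} (hQ : ConvexOn ℝ Set.univ Q) (hPs : ConvexOn ℝ Set.univ Ps)
    (hgQ : ∀ x, HasGradientAt Q (gQ x) x) (hgP : ∀ y, HasGradientAt Ps (gP y) y)
    (hLQ : 0 ≤ LQ) (hLP : 0 ≤ LP)
    (hQlip : LipschitzWith (Real.toNNReal LQ) gQ) (hPlip : LipschitzWith (Real.toNNReal LP) gP)
    {xs : X} {ys : Y} (hxs : -(gQ xs + (ContinuousLinearMap.adjoint K) ys) ∈ subdiff G xs)
    (hys : K xs - gP ys ∈ subdiff Fs ys) {A B : ℝ} {ξ x' : X} {ζ y' : Y}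
    (hx : A • (ξ - x') - gQ ξ - (ContinuousLinearMap.adjoint K) ζ ∈ subdiff G x')
    (hy : B • (ζ - y') - gP ζ + K ((2 : ℝ) • x' - ξ) ∈ subdiff Fs y') :
    blockForm K A B (x' - xs) (y' - ys) ≤ blockForm K A B (ξ - xs) (ζ - ys)
      - blockForm K (A - LQ / 2) (B - LP / 2) (ξ - x') (ζ - y') := by
  have h1 := subdiff_monotone hx hxs
  have h2 := subdiff_monotone hy hys
  have h3 := three_point hLQ hQ hgQ hQlip ξ xs x'
  have h4 := three_point hLP hPs hgP hPlip ζ ys y'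
  obtain ⟨a, rfl⟩ : ∃ a, ξ = x' + a := ⟨ξ - x', by abel⟩
  obtain ⟨b, rfl⟩ : ∃ b, ζ = y' + b := ⟨ζ - y', by abel⟩
  obtain ⟨e, rfl⟩ : ∃ e, x' = xs + e := ⟨x' - xs, by abel⟩
  obtain ⟨f, rfl⟩ : ∃ f, y' = ys + f := ⟨y' - ys, by abel⟩
  rw [show (2 : ℝ) • (xs + e) - (xs + e + a) = xs + e - a by module] at h2
  rw [show xs + e + a - xs = e + a by abel, show ys + f + b - ys = f + b by abel]
  unfold blockForm
  simp only [add_sub_cancel_left] at *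
  rw [norm_add_sq_real, norm_add_sq_real]
  simp only [map_add, map_sub, inner_add_left, inner_sub_left, inner_add_right, inner_neg_left,
    real_inner_smul_left, ContinuousLinearMap.adjoint_inner_left] at *
  rw [real_inner_comm] at h1 h2
  simp only [real_inner_comm _ b] at *
  have c1 := real_inner_comm e a
  have c2 := real_inner_comm f b
  have c3 := real_inner_comm (K e) b
  have c4 := real_inner_comm (K e) f
  linarith

/-- Joint weak lower semicontinuity of a separable sum `Φ(x) + Ψ(y)`. -/
lemma add_le_of_weak_limit {Φ : X → ℝ} {Ψ : Y → ℝ}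
    (hΦ : ConvexOn ℝ Set.univ Φ) (hΦl : LowerSemicontinuous Φ)
    (hΨ : ConvexOn ℝ Set.univ Ψ) (hΨl : LowerSemicontinuous Ψ)
    {x : ℕ → X} {y : ℕ → Y} {U : Ultrafilter ℕ} {p : X} {q : Y}
    (hp : ∀ u, Tendsto (fun k => ⟪x k, u⟫) U (𝓝 ⟪p, u⟫))
    (hq : ∀ v, Tendsto (fun k => ⟪y k, v⟫) U (𝓝 ⟪q, v⟫))
    {t : ℕ → ℝ} {c : ℝ} (ht : Tendsto t U (𝓝 c)) (hle : ∀ k, Φ (x k) + Ψ (y k) ≤ t k) :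
    Φ p + Ψ q ≤ c := by
  refine le_of_forall_pos_le_add fun δ hδ => ?_
  have e1 : ∀ᶠ k in (U : Filter ℕ), Φ p - δ / 2 < Φ (x k) := by
    by_contra hcon
    rw [← Ultrafilter.eventually_not] at hcon
    have := le_of_weak_limit hΦ hΦl hp (hcon.mono fun k hk => not_lt.1 hk)
    linarith
  have e2 : ∀ᶠ k in (U : Filter ℕ), Ψ q - δ / 2 < Ψ (y k) := by
    by_contra hcon
    rw [← Ultrafilter.eventually_not] at hcon
    have := le_of_weak_limit hΨ hΨl hq (hcon.mono fun k hk => not_lt.1 hk)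
    linarith
  have := ge_of_tendsto ht (b := Φ p + Ψ q - δ) (by
    filter_upwards [e1, e2] with k h1 h2
    have := hle k
    linarith)
  linarith

/-- The optimality conditions of one step, tested against `(u, v)`.  The arguments of the first
two inner products are the residuals of the optimality conditions at `(x', y')`; the bilinear
terms cancel down to `⟪y', K u⟫ - ⟪x', K* v⟫`. -/
lemma step_inequality {K : X →L[ℝ] Y} {G Q : X → ℝ} {Fs Ps : Y → ℝ} {gQ : X → X} {gP : Y → Y}
    (hQ : ConvexOn ℝ Set.univ Q) (hPs : ConvexOn ℝ Set.univ Ps)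
    (hgQ : ∀ x, HasGradientAt Q (gQ x) x) (hgP : ∀ y, HasGradientAt Ps (gP y) y)
    {A B : ℝ} {ξ x' : X} {ζ y' : Y}
    (hx : A • (ξ - x') - gQ ξ - (ContinuousLinearMap.adjoint K) ζ ∈ subdiff G x')
    (hy : B • (ζ - y') - gP ζ + K ((2 : ℝ) • x' - ξ) ∈ subdiff Fs y') (u : X) (v : Y) :
    (G x' + Q x') + (Fs y' + Ps y') ≤ (G u + Q u) + (Fs v + Ps v)
      - ⟪A • (ξ - x') + (gQ x' - gQ ξ) - ContinuousLinearMap.adjoint K (ζ - y'), u - x'⟫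
      - ⟪B • (ζ - y') + (gP y' - gP ζ) - K (ξ - x'), v - y'⟫
      + ⟪y', K u⟫ - ⟪x', ContinuousLinearMap.adjoint K v⟫ := by
  have h1 := hx u
  have h2 := hy v
  have h3 := gradient_mem_subdiff hQ (hgQ x') u
  have h4 := gradient_mem_subdiff hPs (hgP y') v
  rw [show (2 : ℝ) • x' - ξ = x' - (ξ - x') by module] at h2
  simp only [map_sub, inner_add_left, inner_sub_left, inner_sub_right,
    real_inner_smul_left, ContinuousLinearMap.adjoint_inner_left,
    ContinuousLinearMap.adjoint_inner_right] at *
  have c1 := real_inner_comm (K x') y'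
  linarith

/-- The set of saddle points contains every weak limit of `(x' k, y' k)` along an ultrafilter on
which the steps `(ξ k - x' k, ζ k - y' k)` tend to zero strongly. -/
lemma saddle_of_weak_limit {K : X →L[ℝ] Y} {G Q : X → ℝ} {Fs Ps : Y → ℝ} {gQ : X → X} {gP : Y → Y}
    {CQ CP : NNReal}
    (hG : ConvexOn ℝ Set.univ G) (hGlsc : LowerSemicontinuous G)
    (hFs : ConvexOn ℝ Set.univ Fs) (hFslsc : LowerSemicontinuous Fs)
    (hQ : ConvexOn ℝ Set.univ Q) (hPs : ConvexOn ℝ Set.univ Ps)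
    (hgQ : ∀ x, HasGradientAt Q (gQ x) x) (hgP : ∀ y, HasGradientAt Ps (gP y) y)
    (hQlip : LipschitzWith CQ gQ) (hPlip : LipschitzWith CP gP)
    {A B : ℝ} {ξ x' : ℕ → X} {ζ y' : ℕ → Y}
    (hx : ∀ k, A • (ξ k - x' k) - gQ (ξ k) - (ContinuousLinearMap.adjoint K) (ζ k)
      ∈ subdiff G (x' k))
    (hy : ∀ k, B • (ζ k - y' k) - gP (ζ k) + K ((2 : ℝ) • x' k - ξ k) ∈ subdiff Fs (y' k))
    {U : Ultrafilter ℕ} {p : X} {q : Y} {R S : ℝ}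
    (hbx : ∀ k, ‖x' k‖ ≤ R) (hby : ∀ k, ‖y' k‖ ≤ S)
    (hξ : Tendsto (fun k => ξ k - x' k) U (𝓝 0)) (hζ : Tendsto (fun k => ζ k - y' k) U (𝓝 0))
    (hp : ∀ u, Tendsto (fun k => ⟪x' k, u⟫) U (𝓝 ⟪p, u⟫))
    (hq : ∀ v, Tendsto (fun k => ⟪y' k, v⟫) U (𝓝 ⟪q, v⟫)) :
    -(gQ p + (ContinuousLinearMap.adjoint K) q) ∈ subdiff G p ∧ K p - gP q ∈ subdiff Fs q := by
  have hKξ : Tendsto (fun k => K (ξ k - x' k)) U (𝓝 0) := by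
    rw [← map_zero K]; exact (K.continuous.tendsto 0).comp hξ
  have hKζ : Tendsto (fun k => ContinuousLinearMap.adjoint K (ζ k - y' k)) U (𝓝 0) := by
    rw [← map_zero (ContinuousLinearMap.adjoint K)]
    exact ((ContinuousLinearMap.adjoint K).continuous.tendsto 0).comp hζ
  have hex := ((hξ.const_smul A).add (tendsto_lipschitz_sub hQlip hξ)).sub hKζ
  have hey := ((hζ.const_smul B).add (tendsto_lipschitz_sub hPlip hζ)).sub hKξ
  simp only [smul_zero, add_zero, sub_zero] at hex hey
  have hQc : Continuous Q := continuous_iff_continuousAt.2 fun x => (hgQ x).continuousAt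
  have hPc : Continuous Ps := continuous_iff_continuousAt.2 fun y => (hgP y).continuousAt
  have hmain (u : X) (v : Y) : (G p + Q p) + (Fs q + Ps q) ≤
      (G u + Q u) + (Fs v + Ps v) - 0 - 0 + ⟪q, K u⟫ - ⟪p, ContinuousLinearMap.adjoint K v⟫ :=
    add_le_of_weak_limit (hG.add hQ) (hGlsc.add hQc.lowerSemicontinuous) (hFs.add hPs)
      (hFslsc.add hPc.lowerSemicontinuous) hp hq
      (((((tendsto_inner_bounded u hex hbx).const_sub ((G u + Q u) + (Fs v + Ps v))).sub
        (tendsto_inner_bounded v hey hby)).add (hq (K u))).sub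
          (hp (ContinuousLinearMap.adjoint K v)))
      (fun k => step_inequality hQ hPs hgQ hgP (hx k) (hy k) u v)
  constructor
  · have h : -(ContinuousLinearMap.adjoint K q) ∈ subdiff (fun z => G z + Q z) p := fun u => by
      have := hmain u q
      simp only [inner_neg_left, inner_sub_right, ContinuousLinearMap.adjoint_inner_left,
        ContinuousLinearMap.adjoint_inner_right] at *
      have c1 := real_inner_comm (K p) q
      linarith
    have := sub_gradient_mem_subdiff hG (hgQ p) h
    rwa [show -(ContinuousLinearMap.adjoint K q) - gQ p
      = -(gQ p + ContinuousLinearMap.adjoint K q) by abel] at this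
  · have h : K p ∈ subdiff (fun z => Fs z + Ps z) q := fun v => by
      have := hmain p v
      simp only [inner_sub_right, ContinuousLinearMap.adjoint_inner_right] at *
      have c1 := real_inner_comm (K p) q
      linarith
    exact sub_gradient_mem_subdiff hFs (hgP q) h

end PrimalDual

/-! ### Weak convergence of the iterates -/

/-- weak convergence of the inertial primal–dual forward–backward algorithm
under summability of the inertial error term in the M-metric.  The convention
`(x⁻¹, y⁻¹) = (x⁰, y⁰)` is encoded via truncated subtraction. -/
theorem stmt7
    {X Y : Type*} [NormedAddCommGroup X] [InnerProductSpace ℝ X] [CompleteSpace X]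
    [NormedAddCommGroup Y] [InnerProductSpace ℝ Y] [CompleteSpace Y]
    (K : X →L[ℝ] Y) (G Q : X → ℝ) (Fs Ps : Y → ℝ)
    (gQ : X → X) (gP : Y → Y) (LQ LP : ℝ)
    (hG : ConvexOn ℝ Set.univ G) (hGlsc : LowerSemicontinuous G)
    (hFs : ConvexOn ℝ Set.univ Fs) (hFslsc : LowerSemicontinuous Fs)
    (hQ : ConvexOn ℝ Set.univ Q) (hPs : ConvexOn ℝ Set.univ Ps)
    (hgQ : ∀ x, HasGradientAt Q (gQ x) x) (hgP : ∀ y, HasGradientAt Ps (gP y) y)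
    (hLQ : 0 ≤ LQ) (hLP : 0 ≤ LP)
    (hQlip : LipschitzWith (Real.toNNReal LQ) gQ)
    (hPlip : LipschitzWith (Real.toNNReal LP) gP)
    -- a saddle point exists
    (hsaddle : ∃ (xs : X) (ys : Y),
      -(gQ xs + (ContinuousLinearMap.adjoint K) ys) ∈ subdiff G xs ∧
      K xs - gP ys ∈ subdiff Fs ys)
    (τ σ : ℝ) (hτ : 0 < τ) (hσ : 0 < σ)
    (hτLQ : τ * LQ < 2) (hσLP : σ * LP < 2)
    (hK : ‖K‖^2 < (1/τ - LQ/2) * (1/σ - LP/2))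
    (α : ℝ) (hα0 : 0 ≤ α) (hα1 : α < 1)
    (αk : ℕ → ℝ) (hαk : ∀ k, αk k ∈ Set.Icc 0 α)
    -- inertial primal–dual forward–backward iterates
    (x ξ : ℕ → X) (y ζ : ℕ → Y)
    (hξ : ∀ k, ξ k = x k + αk k • (x k - x (k - 1)))
    (hζ : ∀ k, ζ k = y k + αk k • (y k - y (k - 1)))
    (hxstep : ∀ k, (1/τ) • (ξ k - x (k + 1)) - gQ (ξ k)
        - (ContinuousLinearMap.adjoint K) (ζ k) ∈ subdiff G (x (k + 1)))
    (hystep : ∀ k, (1/σ) • (ζ k - y (k + 1)) - gP (ζ k)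
        + K ((2:ℝ) • x (k + 1) - ξ k) ∈ subdiff Fs (y (k + 1)))
    -- ∑ α_k ‖(x^k, y^k) − (x^{k−1}, y^{k−1})‖²_M < ∞
    (hsum : Summable (fun k : ℕ => αk k *
      ((1/τ) * ‖x k - x (k - 1)‖^2 - 2 * ⟪K (x k - x (k - 1)), y k - y (k - 1)⟫
        + (1/σ) * ‖y k - y (k - 1)‖^2))) :
    ∃ (xs : X) (ys : Y),
      (-(gQ xs + (ContinuousLinearMap.adjoint K) ys) ∈ subdiff G xs ∧
        K xs - gP ys ∈ subdiff Fs ys) ∧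
      (∀ u : X, Tendsto (fun k => ⟪x k, u⟫) atTop (𝓝 ⟪xs, u⟫)) ∧
      (∀ v : Y, Tendsto (fun k => ⟪y k, v⟫) atTop (𝓝 ⟪ys, v⟫)) := by
  have hτ' : 0 < 1 / τ - LQ / 2 := by
    rw [sub_pos, div_lt_div_iff₀ two_pos hτ]; linarith
  have hσ' : 0 < 1 / σ - LP / 2 := by
    rw [sub_pos, div_lt_div_iff₀ two_pos hσ]; linarith
  obtain ⟨c, hc, hN⟩ := blockForm_coercive K hτ' hσ' hK
  have hV (a : X) (b : Y) : c * (‖a‖ ^ 2 + ‖b‖ ^ 2) ≤ blockForm K (1 / τ) (1 / σ) a b := by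
    have h := hN a b
    have h1 : 0 ≤ LQ / 2 * ‖a‖ ^ 2 := by positivity
    have h2 : 0 ≤ LP / 2 * ‖b‖ ^ 2 := by positivity
    unfold blockForm at *
    linarith
  have hN0 (a : X) (b : Y) : 0 ≤ blockForm K (1 / τ - LQ / 2) (1 / σ - LP / 2) a b :=
    (by positivity : 0 ≤ c * (‖a‖ ^ 2 + ‖b‖ ^ 2)).trans (hN a b)
  have hV0 (a : X) (b : Y) : 0 ≤ blockForm K (1 / τ) (1 / σ) a b :=
    (by positivity : 0 ≤ c * (‖a‖ ^ 2 + ‖b‖ ^ 2)).trans (hV a b)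
  have hsumV : Summable (fun k => αk k *
    blockForm K (1 / τ) (1 / σ) (x k - x (k - 1)) (y k - y (k - 1))) := hsum
  have hfejer (p : X) (q : Y)
      (hs : -(gQ p + (ContinuousLinearMap.adjoint K) q) ∈ subdiff G p ∧
        K p - gP q ∈ subdiff Fs q) :
      (∃ l, Tendsto (fun k => blockForm K (1 / τ) (1 / σ) (x k - p) (y k - q)) atTop (𝓝 l)) ∧
      Summable (fun k => blockForm K (1 / τ - LQ / 2) (1 / σ - LP / 2)
        (ξ k - x (k + 1)) (ζ k - y (k + 1))) := by
    refine alvarez_attouch hα0 hα1 hαk (fun k => hV0 _ _)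
      (fun k => mul_nonneg two_pos.le (mul_nonneg (hαk k).1 (hV0 _ _)))
      (fun k => hN0 _ _) (hsumV.mul_left 2) fun k => ?_
    have h1 := fejer_step hQ hPs hgQ hgP hLQ hLP hQlip hPlip hs.1 hs.2 (hxstep k) (hystep k)
    have h2 := blockForm_inertial K (1 / τ) (1 / σ) (αk k) (x k - p) (x (k - 1) - p)
      (y k - q) (y (k - 1) - q)
    simp only [sub_sub_sub_cancel_right] at h2
    have e1 : x k - p + αk k • (x k - x (k - 1)) = ξ k - p := by rw [hξ]; abel
    have e2 : y k - q + αk k • (y k - y (k - 1)) = ζ k - q := by rw [hζ]; abel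
    rw [e1, e2] at h2
    have h3 := mul_nonneg (hαk k).1 (hV0 (x k - x (k - 1)) (y k - y (k - 1)))
    have h4 := mul_nonneg (sub_nonneg.2 ((hαk k).2.trans hα1.le)) h3
    linarith
  -- By coercivity, vanishing of the form gives strong convergence of both components to zero.
  have hcoer {t : ℕ → ℝ} {a : ℕ → X} {b : ℕ → Y} (ht : Tendsto t atTop (𝓝 0))
      (h : ∀ k, c * (‖a k‖ ^ 2 + ‖b k‖ ^ 2) ≤ t k) :
      Tendsto a atTop (𝓝 0) ∧ Tendsto b atTop (𝓝 0) := by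
    have hlim : Tendsto (fun k => √(t k / c)) atTop (𝓝 0) := by
      simpa [Function.comp_def] using
        (Real.continuous_sqrt.tendsto 0).comp (by simpa using ht.div_const c)
    have hk (k : ℕ) : ‖a k‖ ^ 2 + ‖b k‖ ^ 2 ≤ t k / c := by
      rw [le_div_iff₀ hc, mul_comm]; exact h k
    exact ⟨squeeze_zero_norm (fun k => Real.le_sqrt_of_sq_le
        ((le_add_of_nonneg_right (sq_nonneg _)).trans (hk k))) hlim,
      squeeze_zero_norm (fun k => Real.le_sqrt_of_sq_le
        ((le_add_of_nonneg_left (sq_nonneg _)).trans (hk k))) hlim⟩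
  obtain ⟨xs, ys, hs⟩ := hsaddle
  obtain ⟨⟨l, hl⟩, hνs⟩ := hfejer xs ys hs
  obtain ⟨hstepx, hstepy⟩ := hcoer hνs.tendsto_atTop_zero fun k => hN _ _
  have hinert : Tendsto (fun k => αk k • (x k - x (k - 1))) atTop (𝓝 0) ∧
      Tendsto (fun k => αk k • (y k - y (k - 1))) atTop (𝓝 0) := by
    refine hcoer hsumV.tendsto_atTop_zero fun k => ?_
    rw [norm_smul, norm_smul, mul_pow, mul_pow, Real.norm_eq_abs, sq_abs, ← mul_add]
    have h1 := mul_le_mul_of_nonneg_left (hV (x k - x (k - 1)) (y k - y (k - 1))) (hαk k).1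
    have h2 : αk k ^ 2 ≤ αk k := by
      nlinarith [(hαk k).1, (hαk k).2.trans hα1.le]
    have h3 : 0 ≤ c * (‖x k - x (k - 1)‖ ^ 2 + ‖y k - y (k - 1)‖ ^ 2) := by positivity
    nlinarith [mul_le_mul_of_nonneg_right h2 h3]
  have hdx : Tendsto (fun k => x k - x (k + 1)) atTop (𝓝 0) := by
    have := hstepx.sub hinert.1
    rw [sub_zero] at this
    exact this.congr fun k => by rw [hξ]; abel
  have hdy : Tendsto (fun k => y k - y (k + 1)) atTop (𝓝 0) := by
    have := hstepy.sub hinert.2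
    rw [sub_zero] at this
    exact this.congr fun k => by rw [hζ]; abel
  obtain ⟨C, hC⟩ := hl.bddAbove_range
  have hbd (k : ℕ) : ‖x k - xs‖ ^ 2 + ‖y k - ys‖ ^ 2 ≤ C / c := by
    rw [le_div_iff₀ hc, mul_comm]
    exact (hV _ _).trans (hC ⟨k, rfl⟩)
  have hbx (k : ℕ) : ‖x k‖ ≤ √(C / c) + ‖xs‖ := by
    have h1 : ‖x k - xs‖ ≤ √(C / c) := Real.le_sqrt_of_sq_le
      ((le_add_of_nonneg_right (sq_nonneg _)).trans (hbd k))
    have h2 := norm_add_le (x k - xs) xs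
    rw [sub_add_cancel] at h2
    linarith
  have hby (k : ℕ) : ‖y k‖ ≤ √(C / c) + ‖ys‖ := by
    have h1 : ‖y k - ys‖ ≤ √(C / c) := Real.le_sqrt_of_sq_le
      ((le_add_of_nonneg_left (sq_nonneg _)).trans (hbd k))
    have h2 := norm_add_le (y k - ys) ys
    rw [sub_add_cancel] at h2
    linarith
  have hcluster (U : Ultrafilter ℕ) (hU : (U : Filter ℕ) ≤ atTop) : ∃ (p : X) (q : Y),
      (-(gQ p + (ContinuousLinearMap.adjoint K) q) ∈ subdiff G p ∧ K p - gP q ∈ subdiff Fs q) ∧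
      (∀ u, Tendsto (fun k => ⟪x k, u⟫) U (𝓝 ⟪p, u⟫)) ∧
      (∀ v, Tendsto (fun k => ⟪y k, v⟫) U (𝓝 ⟪q, v⟫)) := by
    obtain ⟨p, hp⟩ := exists_weak_limit hbx U
    obtain ⟨q, hq⟩ := exists_weak_limit hby U
    refine ⟨p, q, saddle_of_weak_limit hG hGlsc hFs hFslsc hQ hPs hgQ hgP hQlip hPlip hxstep hystep
      (fun k => hbx (k + 1)) (fun k => hby (k + 1)) (hstepx.mono_left hU) (hstepy.mono_left hU)
      (fun u => ?_) (fun v => ?_), hp, hq⟩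
    · have h := (hp u).sub ((hdx.mono_left hU).inner (tendsto_const_nhds (x := u)))
      simpa [inner_sub_left] using h
    · have h := (hq v).sub ((hdy.mono_left hU).inner (tendsto_const_nhds (x := v)))
      simpa [inner_sub_left] using h
  obtain ⟨p, q, hpq, hp, hq⟩ := hcluster (hyperfilter ℕ) Nat.hyperfilter_le_atTop
  -- Opial's argument: the difference of the squared `M`-distances to two weak cluster points
  -- converges, and is weakly continuous, so its limits at both cluster points agree.
  have huniq (U : Ultrafilter ℕ) (hU : (U : Filter ℕ) ≤ atTop) :
      (∀ u, Tendsto (fun k => ⟪x k, u⟫) U (𝓝 ⟪p, u⟫)) ∧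
      (∀ v, Tendsto (fun k => ⟪y k, v⟫) U (𝓝 ⟪q, v⟫)) := by
    obtain ⟨p', q', hpq', hp', hq'⟩ := hcluster U hU
    obtain ⟨⟨l₁, h₁⟩, -⟩ := hfejer p q hpq
    obtain ⟨⟨l₂, h₂⟩, -⟩ := hfejer p' q' hpq'
    have e₁ := tendsto_nhds_unique ((h₁.sub h₂).mono_left Nat.hyperfilter_le_atTop)
      (tendsto_blockForm_sub K (1 / τ) (1 / σ) hp hq p p' q q')
    have e₂ := tendsto_nhds_unique ((h₁.sub h₂).mono_left hU)
      (tendsto_blockForm_sub K (1 / τ) (1 / σ) hp' hq' p p' q q')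
    have hzero : blockForm K (1 / τ) (1 / σ) (0 : X) (0 : Y) = 0 := by simp [blockForm]
    simp only [sub_self, hzero] at e₁ e₂
    have h3 : ‖p - p'‖ ^ 2 + ‖q - q'‖ ^ 2 ≤ 0 := by
      have h4 := hV (p - p') (q - q')
      have h5 := hV0 (p' - p) (q' - q)
      by_contra hcon
      have := mul_pos hc (not_le.1 hcon)
      linarith
    have hpp : p = p' := by
      rw [← sub_eq_zero, ← norm_eq_zero, ← sq_eq_zero_iff]
      nlinarith [sq_nonneg ‖p - p'‖, sq_nonneg ‖q - q'‖]
    have hqq : q = q' := by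
      rw [← sub_eq_zero, ← norm_eq_zero, ← sq_eq_zero_iff]
      nlinarith [sq_nonneg ‖p - p'‖, sq_nonneg ‖q - q'‖]
    rw [hpp, hqq]
    exact ⟨hp', hq'⟩
  exact ⟨p, q, hpq, fun u => (tendsto_iff_ultrafilter _ _ _).2 fun U hU => (huniq U hU).1 u,
    fun v => (tendsto_iff_ultrafilter _ _ _).2 fun U hU => (huniq U hU).2 v⟩
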